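/- Let n ≥ 1 and let α ∈ ℤ_{≥0}^n be a composition. If the key polynomial κ_α(x) equals Max_α(x), then α avoids the composition pattern (0,2), i.e., there do not exist indices i < j with α_j − α_i ≥ 2. -/

import Mathlib

open MvPolynomial

/-- Gale order: `C ≤ D` iff same cardinality and for each `k`, the `k`-th least element of `C`
is at most the `k`-th least element of `D`. -/
def GaleLE {n : ℕ} (C D : Finset (Fin n)) : Prop :=
  C.card = D.card ∧ ∀ (k : ℕ) (hC : k < C.card) (hD : k < D.card),
    (C.orderIsoOfFin rfl ⟨k, hC⟩ : Fin n) ≤ (D.orderIsoOfFin rfl ⟨k, hD⟩ : Fin n)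

/-- `C ≤ D` for diagrams: columnwise Gale order. -/
def DiagramLE {n : ℕ} (C D : Fin n → Finset (Fin n)) : Prop := ∀ j, GaleLE (C j) (D j)

/-- The skyline diagram of a composition `α` (0-indexed): column `j` consists of the rows `i`
with `α i ≥ j + 1`, i.e. row `i` contains the first `α i` boxes. -/
def skyline {n : ℕ} (α : Fin n → ℕ) (j : Fin n) : Finset (Fin n) :=
  Finset.univ.filter fun i => (j : ℕ) < α i

/-- The monomial `x^C = ∏_j ∏_{i ∈ C_j} x_i` of a diagram `C`. -/
noncomputable def xDiagram {n : ℕ} (C : Fin n → Finset (Fin n)) : MvPolynomial (Fin n) ℤ :=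
  ∏ j, ∏ i ∈ C j, X i

/- `Max_D(x) = ∑_{C ≤ D} x^C`, summed over all diagrams `C` with `C ≤ D`. -/
open scoped Classical in
noncomputable def MaxPoly {n : ℕ} (D : Fin n → Finset (Fin n)) : MvPolynomial (Fin n) ℤ :=
  ∑ C ∈ Finset.univ.filter (fun C : Fin n → Finset (Fin n) => DiagramLE C D), xDiagram C

/-- `K` is the family of key polynomials: `K α = x^α` whenever `α` is weakly decreasing,
and whenever `α i < α (i+1)`, `K α = π_i (K α')` where `α'` exchanges `α i, α (i+1)`;
the Demazure operator identity `π_i f = ∂_i (x_i f)` is expressed denominator-free as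
`(x_i - x_{i+1}) · π_i f = x_i f - s_i · (x_i f)`. -/
def IsKeyFamily {n : ℕ} (K : (Fin n → ℕ) → MvPolynomial (Fin n) ℤ) : Prop :=
  (∀ α : Fin n → ℕ, (∀ i j : Fin n, i ≤ j → α j ≤ α i) → K α = ∏ i, X i ^ α i) ∧
  ∀ (α : Fin n → ℕ) (i j : Fin n), (i : ℕ) + 1 = (j : ℕ) → α i < α j →
    (X i - X j) * K α =
      X i * K (α ∘ Equiv.swap i j) -
        rename (Equiv.swap i j) (X i * K (α ∘ Equiv.swap i j))

/-- `α` avoids the composition pattern `(0,2)`: there are no indices `i < j` with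
`α j - α i ≥ 2`. -/
def AvoidsZeroTwo {n : ℕ} (α : Fin n → ℕ) : Prop :=
  ¬ ∃ i j : Fin n, i < j ∧ α i + 2 ≤ α j

open Finset Function

/-!
Choose `i < j` with `α i + 2 ≤ α j` and `j - i` minimal. Then any `l` strictly between `i` and `j`
has `α l = α i + 1`, and if there is one, `α j = α i + 2`. We compare the coefficients of `x^β` in
the two polynomials, where `β` is `α` with one unit moved from the entry at `j` to the entry at `i`.

In `Max_α` the coefficient is at least `j - i + 1`: for each `l` with `i ≤ l ≤ j`, move a box of the
skyline diagram from row `l` to row `i` in column `α i + 1`, and one from row `j` to row `l` in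
column `α i + 2` (columns counted from `1`).

In `κ_α` it is at most `j - i`. The Demazure operator `π_i` mixes only coefficients along a string
of exponents `γ` with fixed `γ i + γ (i + 1)`. Every exponent of `κ_α` has squared norm at most that
of `α`, and the coefficients of exponents attaining this bound are `0` or `1`; hence each of the
`j - i` Demazure steps that carry the small entry `α i` up to and past `α j` raises the coefficient
in question by at most `1`. Before these steps the coefficient is `0`, since it belongs to an
exponent with a partial sum smaller than dominance allows.
-/

section Strings

variable {σ : Type*} [DecidableEq σ] {i j : σ}

/-- The point with `i`-th entry `t` on the `(i, j)`-string through `γ`, that is, among the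
exponents that differ from `γ` only at `i` and `j` and have the same sum `γ i + γ j` there.
It is meant for `t ≤ γ i + γ j`; beyond that the `j`-th entry is truncated to `0`. -/
def stringPoint (γ : σ → ℕ) (i j : σ) (t : ℕ) : σ → ℕ :=
  update (update γ i t) j (γ i + γ j - t)

theorem stringPoint_apply (γ : σ → ℕ) (i j : σ) (t : ℕ) (l : σ) :
    stringPoint γ i j t l = if l = j then γ i + γ j - t else if l = i then t else γ l := by
  simp only [stringPoint, update_apply]

theorem stringPoint_self (γ : σ → ℕ) (i j : σ) : stringPoint γ i j (γ i) = γ := by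
  simp [stringPoint]

theorem comp_swap_eq_stringPoint (γ : σ → ℕ) (i j : σ) :
    γ ∘ Equiv.swap i j = stringPoint γ i j (γ j) := by
  funext l
  rw [stringPoint_apply, comp_apply, Equiv.swap_apply_def]
  grind

theorem stringPoint_comp_swap (γ : σ → ℕ) (hij : i ≠ j) {t : ℕ} (ht : t ≤ γ i + γ j) :
    stringPoint γ i j t ∘ Equiv.swap i j = stringPoint γ i j (γ i + γ j - t) := by
  funext l
  rw [comp_apply, stringPoint_apply, stringPoint_apply, Equiv.swap_apply_def]
  grind

theorem stringPoint_stringPoint (γ : σ → ℕ) (hij : i ≠ j) {s : ℕ} (hs : s ≤ γ i + γ j) (t : ℕ) :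
    stringPoint (stringPoint γ i j s) i j t = stringPoint γ i j t := by
  funext l
  simp only [stringPoint_apply, if_neg hij, if_true, Nat.add_sub_cancel' hs]
  split_ifs <;> rfl

theorem sum_stringPoint [Fintype σ] {M : Type*} [AddCommMonoid M] (φ : σ → ℕ → M) (γ : σ → ℕ)
    (hij : i ≠ j) (t : ℕ) :
    ∑ l, φ l (stringPoint γ i j t l) + (φ i (γ i) + φ j (γ j)) =
      ∑ l, φ l (γ l) + (φ i t + φ j (γ i + γ j - t)) := by
  have agree_off : ∑ l ∈ {i, j}ᶜ, φ l (stringPoint γ i j t l) = ∑ l ∈ {i, j}ᶜ, φ l (γ l) :=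
    sum_congr rfl fun l hl => by
      simp only [mem_compl, mem_insert, mem_singleton, not_or] at hl
      rw [stringPoint_apply, if_neg hl.2, if_neg hl.1]
  rw [← sum_add_sum_compl {i, j}, ← sum_add_sum_compl {i, j} fun l => φ l (γ l), agree_off,
    sum_pair hij, sum_pair hij]
  simp only [stringPoint_apply, if_neg hij, if_true]
  abel

theorem sq_add_sq_le_iff_max_le {t s u v : ℕ} (h : t + s = u + v) :
    t ^ 2 + s ^ 2 ≤ u ^ 2 + v ^ 2 ↔ max t s ≤ max u v := by
  wlog hts : t ≤ s generalizing t s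
  · rw [add_comm (t ^ 2), max_comm t]
    exact this (by omega) (by omega)
  wlog huv : u ≤ v generalizing u v
  · rw [add_comm (u ^ 2), max_comm u]
    exact this (by omega) (by omega)
  rw [max_eq_right hts, max_eq_right huv]
  constructor
  · intro hsq
    by_contra! hvs
    nlinarith
  · intro hsv
    obtain ⟨d, rfl⟩ := Nat.exists_eq_add_of_le hsv
    obtain rfl : t = u + d := by omega
    nlinarith

theorem sum_sq_stringPoint_le_iff [Fintype σ] (γ : σ → ℕ) (hij : i ≠ j) {t t' : ℕ}
    (ht : t ≤ γ i + γ j) (ht' : t' ≤ γ i + γ j) :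
    ∑ l, stringPoint γ i j t l ^ 2 ≤ ∑ l, stringPoint γ i j t' l ^ 2 ↔
      max t (γ i + γ j - t) ≤ max t' (γ i + γ j - t') := by
  rw [← sq_add_sq_le_iff_max_le (by omega)]
  have h := sum_stringPoint (fun _ x => x ^ 2) γ hij t
  have h' := sum_stringPoint (fun _ x => x ^ 2) γ hij t'
  omega

end Strings

section Demazure

variable {σ R : Type*} [CommRing R] {i j : σ}

/-- The coefficient of `x^γ` in `p`, for an exponent given as a plain function. -/
noncomputable def coeffAt [Finite σ] (p : MvPolynomial σ R) (γ : σ → ℕ) : R :=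
  coeff (Finsupp.equivFunOnFinite.symm γ) p

theorem coeffAt_prod_X_pow [Fintype σ] (α γ : σ → ℕ) :
    coeffAt (∏ l, X l ^ α l : MvPolynomial σ R) γ = if α = γ then 1 else 0 := by
  classical
  have h : (∏ l, X l ^ α l : MvPolynomial σ R) =
      monomial (Finsupp.equivFunOnFinite.symm α) 1 := by
    simp [monomial_eq, Finsupp.prod_fintype]
  simp [coeffAt, h, coeff_monomial]

theorem coeffAt_rename_equiv [Finite σ] (p : MvPolynomial σ R) (e : σ ≃ σ) (γ : σ → ℕ) :
    coeffAt (rename e p) γ = coeffAt p (γ ∘ e) := by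
  rw [coeffAt, coeffAt, ← coeff_rename_mapDomain e e.injective p]
  congr 1
  ext l
  obtain ⟨m, rfl⟩ := e.surjective l
  simp [Finsupp.mapDomain_apply e.injective]

variable [DecidableEq σ]

theorem coeffAt_X_mul [Finite σ] (p : MvPolynomial σ R) (l : σ) (γ : σ → ℕ) :
    coeffAt (X l * p) γ = if γ l = 0 then 0 else coeffAt p (update γ l (γ l - 1)) := by
  rw [coeffAt, coeff_X_mul']
  simp only [Finsupp.mem_support_iff, Finsupp.equivFunOnFinite_symm_apply_apply, ne_eq, ite_not]
  congr 2
  ext m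
  obtain rfl | hm := eq_or_ne m l <;> simp [*]

/-- `g = π f` for the Demazure operator `π f = (x_i f - s (x_i f)) / (x_i - x_j)`, where `s`
exchanges `x_i` and `x_j`; the denominator is cleared. -/
def IsDemazureImage (i j : σ) (f g : MvPolynomial σ R) : Prop :=
  (X i - X j) * g = X i * f - rename (Equiv.swap i j) (X i * f)

theorem eq_sum_range_of_demazure_recurrence {F G : ℕ → R} {N : ℕ} (h0 : G 0 = F N)
    (hsucc : ∀ u < N, G u - G (u + 1) = F u - F (N - (u + 1))) {u : ℕ} (hu : u ≤ N) :
    G u = ∑ t ∈ range (N + 1), F t - ∑ t ∈ range (N - u), F t - ∑ t ∈ range u, F t := by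
  induction u with
  | zero => simp [h0, sum_range_succ]
  | succ u ih =>
    have hrange : range (N - u) = range (N - (u + 1) + 1) := by congr 1; omega
    have ih := ih (by omega)
    rw [hrange, sum_range_succ _ (N - (u + 1))] at ih
    rw [sum_range_succ _ u]
    linear_combination ih - hsucc u (by omega)

variable [Finite σ] {f g : MvPolynomial σ R}

theorem IsDemazureImage.coeffAt_sub (h : IsDemazureImage i j f g) (γ : σ → ℕ) :
    coeffAt (X i * g) γ - coeffAt (X j * g) γ =
      coeffAt (X i * f) γ - coeffAt (X i * f) (γ ∘ Equiv.swap i j) := by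
  rw [← coeffAt_rename_equiv]
  simpa only [coeffAt, sub_mul, coeff_sub] using congrArg (coeffAt · γ) h

theorem IsDemazureImage.coeffAt_update_sub (h : IsDemazureImage i j f g) (hij : i ≠ j)
    (γ : σ → ℕ) (a b : ℕ) :
    ((if a = 0 then 0 else coeffAt g (update (update γ i (a - 1)) j b)) -
        if b = 0 then 0 else coeffAt g (update (update γ i a) j (b - 1))) =
      (if a = 0 then 0 else coeffAt f (update (update γ i (a - 1)) j b)) -
        if b = 0 then 0 else coeffAt f (update (update γ i (b - 1)) j a) := by
  have hswap : update (update (update γ i a) j b ∘ Equiv.swap i j) i (b - 1) =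
      update (update γ i (b - 1)) j a := by
    funext l
    simp only [update_apply, comp_apply, Equiv.swap_apply_def]
    grind
  have hcomm (c : ℕ) : update (update (update γ i a) j b) i c = update (update γ i c) j b := by
    rw [update_comm hij.symm, update_idem]
  simpa [coeffAt_X_mul, hij, hswap, hcomm] using h.coeffAt_sub (update (update γ i a) j b)

theorem IsDemazureImage.coeffAt_eq_sum_range (h : IsDemazureImage i j f g) (hij : i ≠ j)
    (γ : σ → ℕ) :
    coeffAt g γ = ∑ t ∈ range (γ i + γ j + 1), coeffAt f (stringPoint γ i j t) -
      ∑ t ∈ range (γ j), coeffAt f (stringPoint γ i j t) -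
      ∑ t ∈ range (γ i), coeffAt f (stringPoint γ i j t) := by
  have key := eq_sum_range_of_demazure_recurrence (N := γ i + γ j) (u := γ i)
    (F := fun t => coeffAt f (stringPoint γ i j t))
    (G := fun t => coeffAt g (stringPoint γ i j t)) ?_ ?_ (Nat.le_add_right _ _)
  · simpa only [stringPoint_self, Nat.add_sub_cancel_left] using key
  · simpa [stringPoint] using h.coeffAt_update_sub hij γ 0 (γ i + γ j + 1)
  · intro u hu
    have hpos : γ i + γ j - u ≠ 0 := by omega
    simpa [stringPoint, hpos, Nat.sub_sub, Nat.sub_sub_self (Nat.succ_le_of_lt hu)] using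
      h.coeffAt_update_sub hij γ (u + 1) (γ i + γ j - u)

theorem IsDemazureImage.coeffAt_eq_sum_Ico_sub (h : IsDemazureImage i j f g) (hij : i ≠ j)
    (γ : σ → ℕ) :
    coeffAt g γ =
      ∑ t ∈ Ico (max (γ i) (γ j)) (γ i + γ j + 1), coeffAt f (stringPoint γ i j t) -
        ∑ t ∈ range (min (γ i) (γ j)), coeffAt f (stringPoint γ i j t) := by
  rw [h.coeffAt_eq_sum_range hij, sum_Ico_eq_sub _ (by omega)]
  rcases le_total (γ i) (γ j) with hle | hle
  · rw [max_eq_right hle, min_eq_left hle]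
  · rw [max_eq_left hle, min_eq_right hle, sub_right_comm]

theorem IsDemazureImage.exists_coeffAt_ne_zero (h : IsDemazureImage i j f g) (hij : i ≠ j)
    {γ : σ → ℕ} (hγ : coeffAt g γ ≠ 0) :
    ∃ t ≤ γ i + γ j, max (γ i) (γ j) ≤ max t (γ i + γ j - t) ∧
      coeffAt f (stringPoint γ i j t) ≠ 0 := by
  by_contra! hzero
  rw [h.coeffAt_eq_sum_Ico_sub hij, sum_eq_zero, sum_eq_zero, sub_zero] at hγ
  · exact hγ rfl
  · intro t ht
    rw [mem_range] at ht
    exact hzero t (by omega) (by omega)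
  · intro t ht
    rw [mem_Ico] at ht
    exact hzero t (by omega) (by omega)

end Demazure

section Key

variable {n : ℕ} {K : (Fin n → ℕ) → MvPolynomial (Fin n) ℤ} {α γ : Fin n → ℕ} {i j : Fin n}

theorem composition_induction {motive : (Fin n → ℕ) → Prop}
    (antitone : ∀ α, Antitone α → motive α)
    (swap : ∀ (α) (i j : Fin n), (i : ℕ) + 1 = j → α i < α j →
      motive (α ∘ Equiv.swap i j) → motive α) (α : Fin n → ℕ) : motive α := by
  induction hm : ∑ l : Fin n, (l : ℕ) * α l using Nat.strong_induction_on generalizing α with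
  | _ m ih =>
    by_cases hα : Antitone α
    · exact antitone α hα
    obtain ⟨i, j, hij, hlt⟩ : ∃ i j : Fin n, i ⋖ j ∧ α i < α j := by
      simpa [antitone_iff_forall_covBy] using hα
    have hij : (i : ℕ) + 1 = j := Nat.covBy_iff_add_one_eq.mp (Fin.covBy_iff.mp hij)
    refine swap α i j hij hlt (ih _ ?_ _ rfl)
    have hsum := sum_stringPoint (fun (l : Fin n) x => (l : ℕ) * x) α
      (Fin.ne_of_val_ne (by omega) : i ≠ j) (α j)
    rw [comp_swap_eq_stringPoint]
    simp only [Nat.add_sub_cancel, ← hij] at hsum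
    linarith

theorem sum_sq_comp_swap (α : Fin n → ℕ) (i j : Fin n) :
    ∑ l, (α ∘ Equiv.swap i j) l ^ 2 = ∑ l, α l ^ 2 :=
  Equiv.sum_comp (Equiv.swap i j) fun l => α l ^ 2

theorem IsKeyFamily.coeffAt_of_antitone (hK : IsKeyFamily K) (hα : Antitone α) (γ : Fin n → ℕ) :
    coeffAt (K α) γ = if α = γ then 1 else 0 := by
  rw [hK.1 α hα, coeffAt_prod_X_pow]

theorem IsKeyFamily.isDemazureImage (hK : IsKeyFamily K) (hij : (i : ℕ) + 1 = j)
    (hα : α i < α j) : IsDemazureImage i j (K (α ∘ Equiv.swap i j)) (K α) :=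
  hK.2 α i j hij hα

theorem IsKeyFamily.sum_sq_le (hK : IsKeyFamily K) (hγ : coeffAt (K α) γ ≠ 0) :
    ∑ l, γ l ^ 2 ≤ ∑ l, α l ^ 2 := by
  induction α using composition_induction generalizing γ with
  | antitone α hα =>
    rw [hK.coeffAt_of_antitone hα, ite_ne_right_iff] at hγ
    rw [hγ.1]
  | swap α i j hij hα ih =>
    have hne : i ≠ j := Fin.ne_of_val_ne (by omega)
    obtain ⟨t, htN, htmax, ht⟩ := (hK.isDemazureImage hij hα).exists_coeffAt_ne_zero hne hγ
    calc ∑ l, γ l ^ 2 = ∑ l, stringPoint γ i j (γ i) l ^ 2 := by rw [stringPoint_self]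
      _ ≤ ∑ l, stringPoint γ i j t l ^ 2 := by
        rwa [sum_sq_stringPoint_le_iff γ hne (Nat.le_add_right _ _) htN, Nat.add_sub_cancel_left]
      _ ≤ ∑ l, (α ∘ Equiv.swap i j) l ^ 2 := ih ht
      _ = ∑ l, α l ^ 2 := sum_sq_comp_swap α i j

theorem IsKeyFamily.coeffAt_stringPoint_eq_zero (hK : IsKeyFamily K) (hij : i ≠ j) {s t : ℕ}
    (hs : s ≤ γ i + γ j) (ht : t ≤ γ i + γ j)
    (hα : ∑ l, α l ^ 2 ≤ ∑ l, stringPoint γ i j s l ^ 2)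
    (hst : max s (γ i + γ j - s) < max t (γ i + γ j - t)) :
    coeffAt (K α) (stringPoint γ i j t) = 0 := by
  by_contra hne
  exact hst.not_ge <|
    (sum_sq_stringPoint_le_iff γ hij ht hs).mp ((hK.sum_sq_le hne).trans hα)

theorem IsKeyFamily.coeffAt_eq_of_sum_sq_le (hK : IsKeyFamily K) (hij : (i : ℕ) + 1 = j)
    (hα : α i < α j) (hγ : ∑ l, α l ^ 2 ≤ ∑ l, γ l ^ 2) :
    coeffAt (K α) γ =
      coeffAt (K (α ∘ Equiv.swap i j)) (stringPoint γ i j (max (γ i) (γ j))) := by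
  have hne : i ≠ j := Fin.ne_of_val_ne (by omega)
  have vanish {t : ℕ} (htN : t ≤ γ i + γ j) (ht : max (γ i) (γ j) < max t (γ i + γ j - t)) :
      coeffAt (K (α ∘ Equiv.swap i j)) (stringPoint γ i j t) = 0 :=
    hK.coeffAt_stringPoint_eq_zero (s := γ i) hne (Nat.le_add_right _ _) htN
      (by rwa [sum_sq_comp_swap, stringPoint_self]) (by rwa [Nat.add_sub_cancel_left])
  rw [(hK.isDemazureImage hij hα).coeffAt_eq_sum_Ico_sub hne,
    sum_eq_sum_Ico_succ_bot (by omega), sum_eq_zero, sum_eq_zero, add_zero, sub_zero]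
  · intro t ht
    rw [mem_range] at ht
    exact vanish (by omega) (by omega)
  · intro t ht
    rw [mem_Ico] at ht
    exact vanish (by omega) (by omega)

theorem IsKeyFamily.coeffAt_mem_Icc_of_sum_sq_le (hK : IsKeyFamily K)
    (hγ : ∑ l, α l ^ 2 ≤ ∑ l, γ l ^ 2) : coeffAt (K α) γ ∈ Set.Icc 0 1 := by
  induction α using composition_induction generalizing γ with
  | antitone α hα =>
    rw [hK.coeffAt_of_antitone hα]
    split_ifs <;> simp
  | swap α i j hij hα ih =>
    have hne : i ≠ j := Fin.ne_of_val_ne (by omega)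
    rw [hK.coeffAt_eq_of_sum_sq_le hij hα hγ]
    apply ih
    calc ∑ l, (α ∘ Equiv.swap i j) l ^ 2 = ∑ l, α l ^ 2 := sum_sq_comp_swap α i j
      _ ≤ ∑ l, stringPoint γ i j (γ i) l ^ 2 := by rwa [stringPoint_self]
      _ ≤ ∑ l, stringPoint γ i j (max (γ i) (γ j)) l ^ 2 :=
        (sum_sq_stringPoint_le_iff γ hne (by omega) (by omega)).mpr (by omega)

theorem IsKeyFamily.coeffAt_self (hK : IsKeyFamily K) (α : Fin n → ℕ) : coeffAt (K α) α = 1 := by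
  induction α using composition_induction with
  | antitone α hα => rw [hK.coeffAt_of_antitone hα, if_pos rfl]
  | swap α i j hij hα ih =>
    rwa [hK.coeffAt_eq_of_sum_sq_le hij hα le_rfl, max_eq_right hα.le,
      ← comp_swap_eq_stringPoint]

theorem IsKeyFamily.coeffAt_le_add_one (hK : IsKeyFamily K) (hij : (i : ℕ) + 1 = j)
    (hα : α i < α j) (hi : 0 < γ i) (hj : 0 < γ j)
    (hγ : ∑ l, α l ^ 2 ≤ ∑ l, stringPoint γ i j (max (γ i) (γ j) + 1) l ^ 2) :
    coeffAt (K α) γ ≤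
      coeffAt (K (α ∘ Equiv.swap i j)) (stringPoint γ i j (max (γ i) (γ j))) + 1 := by
  have hne : i ≠ j := Fin.ne_of_val_ne (by omega)
  set F : ℕ → ℤ := fun t => coeffAt (K (α ∘ Equiv.swap i j)) (stringPoint γ i j t)
  set M := max (γ i) (γ j) with hM
  rw [← sum_sq_comp_swap α i j] at hγ
  have extremal {t : ℕ} (htN : t ≤ γ i + γ j) (ht : M + 1 ≤ max t (γ i + γ j - t)) :
      F t ∈ Set.Icc 0 1 :=
    hK.coeffAt_mem_Icc_of_sum_sq_le <| hγ.trans <|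
      (sum_sq_stringPoint_le_iff γ hne (by omega) htN).mpr (by omega)
  have vanish : ∑ t ∈ Ico (M + 1 + 1) (γ i + γ j + 1), F t = 0 :=
    sum_eq_zero fun t ht => by
      rw [mem_Ico] at ht
      exact hK.coeffAt_stringPoint_eq_zero (s := M + 1) hne (by omega) (by omega) hγ (by omega)
  have correction_nonneg : 0 ≤ ∑ t ∈ range (min (γ i) (γ j)), F t :=
    sum_nonneg fun t ht => by
      rw [mem_range] at ht
      exact (extremal (by omega) (by omega)).1
  have next_le_one : F (M + 1) ≤ 1 := (extremal (by omega) (by omega)).2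
  rw [(hK.isDemazureImage hij hα).coeffAt_eq_sum_Ico_sub hne,
    sum_eq_sum_Ico_succ_bot (by omega), sum_eq_sum_Ico_succ_bot (by omega), vanish]
  linarith

end Key

section Gale

variable {n : ℕ} {S T U : Finset (Fin n)} {i j x y : Fin n}

/-- The number of elements of `S` smaller than `k`. The Gale order compares these counting
functions, which behave better under insertion and removal than the sorted lists of elements. -/
def countBelow (S : Finset (Fin n)) (k : ℕ) : ℕ := #(S.filter fun l : Fin n => (l : ℕ) < k)

theorem orderIsoOfFin_lt_iff (S : Finset (Fin n)) (m : Fin #S) (k : ℕ) :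
    ((S.orderIsoOfFin rfl m : Fin n) : ℕ) < k ↔ m < countBelow S k := by
  have hcount : countBelow S k = #{p : Fin #S | ((S.orderIsoOfFin rfl p : Fin n) : ℕ) < k} := by
    conv_lhs => rw [countBelow, ← S.map_orderEmbOfFin_univ rfl, filter_map, card_map]
    rfl
  rw [hcount]
  constructor
  · intro hm
    rw [← Nat.succ_le_iff, Nat.succ_eq_add_one, ← Fin.card_Iic]
    refine card_le_card fun p hp => mem_filter.mpr ⟨mem_univ p, lt_of_le_of_lt ?_ hm⟩
    exact (S.orderIsoOfFin rfl).monotone (mem_Iic.mp hp)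
  · contrapose!
    intro hm
    rw [← Fin.card_Iio]
    refine card_le_card fun p hp => mem_Iio.mpr ?_
    exact (S.orderIsoOfFin rfl).lt_iff_lt.mp ((mem_filter.mp hp).2.trans_le hm)

theorem galeLE_iff_countBelow :
    GaleLE S T ↔ #S = #T ∧ ∀ k, countBelow T k ≤ countBelow S k := by
  refine and_congr_right fun hcard => ⟨fun h k => ?_, fun h k hS hT => ?_⟩
  · by_contra! hlt
    have hT : countBelow S k < #T := hlt.trans_le (card_filter_le _ _)
    have hS : countBelow S k < #S := hcard ▸ hT
    have hTk := (orderIsoOfFin_lt_iff T ⟨_, hT⟩ k).mpr hlt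
    exact lt_irrefl _ ((orderIsoOfFin_lt_iff S ⟨_, hS⟩ k).mp (lt_of_le_of_lt (h _ hS hT) hTk))
  · have hTk := (orderIsoOfFin_lt_iff T ⟨k, hT⟩ _).mp (Nat.lt_succ_self _)
    exact Nat.lt_succ_iff.mp ((orderIsoOfFin_lt_iff S ⟨k, hS⟩ _).mpr (hTk.trans_le (h _)))

theorem GaleLE.refl (S : Finset (Fin n)) : GaleLE S S :=
  galeLE_iff_countBelow.mpr ⟨rfl, fun _ => le_rfl⟩

theorem GaleLE.trans (hST : GaleLE S T) (hTU : GaleLE T U) : GaleLE S U := by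
  rw [galeLE_iff_countBelow] at *
  exact ⟨hST.1.trans hTU.1, fun k => (hTU.2 k).trans (hST.2 k)⟩

theorem countBelow_insert (hx : x ∉ S) (k : ℕ) :
    countBelow (insert x S) k = countBelow S k + if (x : ℕ) < k then 1 else 0 := by
  rw [countBelow, filter_insert]
  split_ifs
  · rw [card_insert_of_notMem fun h => hx (mem_of_mem_filter x h), countBelow]
  · rw [countBelow, add_zero]

theorem countBelow_erase_add (hx : x ∈ S) (k : ℕ) :
    (countBelow (S.erase x) k + if (x : ℕ) < k then 1 else 0) = countBelow S k := by
  rw [← countBelow_insert (notMem_erase x S), insert_erase hx]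

theorem countBelow_succ (S : Finset (Fin n)) (l : Fin n) :
    countBelow S (l + 1) = countBelow S l + if l ∈ S then 1 else 0 := by
  have hsplit (m : Fin n) : (m : ℕ) < l + 1 ↔ m = l ∨ (m : ℕ) < l := by
    rw [Fin.ext_iff]; omega
  simp only [countBelow, hsplit, filter_or]
  rw [card_union_of_disjoint, filter_eq', add_comm]
  · split_ifs <;> simp
  · rw [disjoint_filter]
    rintro m - rfl
    exact lt_irrefl _

theorem countBelow_map_swap (hij : (i : ℕ) + 1 = j) (S : Finset (Fin n)) {k : ℕ} (hk : k ≠ j) :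
    countBelow (S.map (Equiv.swap i j).toEmbedding) k = countBelow S k := by
  rw [countBelow, filter_map, card_map, countBelow]
  congr 1
  refine filter_congr fun l _ => ?_
  rw [comp_apply, Equiv.toEmbedding_apply, Equiv.swap_apply_def]
  split_ifs with hi hj
  · subst hi; omega
  · subst hj; omega
  · rfl

theorem galeLE_insert_insert (hyx : y ≤ x) (hx : x ∉ S) (hy : y ∉ S) :
    GaleLE (insert y S) (insert x S) := by
  refine galeLE_iff_countBelow.mpr ⟨?_, fun k => ?_⟩
  · rw [card_insert_of_notMem hx, card_insert_of_notMem hy]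
  · rw [countBelow_insert hx, countBelow_insert hy]
    split_ifs <;> omega

theorem galeLE_erase_erase (hyx : y ≤ x) (hx : x ∈ S) (hy : y ∈ S) :
    GaleLE (S.erase x) (S.erase y) := by
  refine galeLE_iff_countBelow.mpr ⟨?_, fun k => ?_⟩
  · rw [card_erase_of_mem hx, card_erase_of_mem hy]
  · have hxk := countBelow_erase_add hx k
    have hyk := countBelow_erase_add hy k
    split_ifs at hxk hyk <;> omega

theorem GaleLE.of_map_swap (hij : (i : ℕ) + 1 = j) (hT : j ∈ T → i ∈ T)
    (h : GaleLE T (S.map (Equiv.swap i j).toEmbedding)) : GaleLE T S := by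
  rw [galeLE_iff_countBelow, card_map] at h
  have hcount {k : ℕ} (hk : k ≠ j) : countBelow S k ≤ countBelow T k :=
    (countBelow_map_swap hij S hk).symm.trans_le (h.2 k)
  refine galeLE_iff_countBelow.mpr ⟨h.1, fun k => ?_⟩
  obtain rfl | hk := eq_or_ne k j
  · have hS := countBelow_succ S i
    have hS' := countBelow_succ S j
    have hT₁ := countBelow_succ T i
    have hT₂ := countBelow_succ T j
    have hi := hcount (k := i) (by omega)
    have hj := hcount (k := j + 1) (by omega)
    rw [hij] at hS hT₁
    by_cases hjT : j ∈ T
    · rw [if_pos (hT hjT)] at hT₁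
      split_ifs at hS <;> omega
    · rw [if_neg hjT] at hT₂
      omega
  · exact hcount hk

theorem galeLE_map_swap (hij : (i : ℕ) + 1 = j) (hT : i ∈ T → j ∈ T) :
    GaleLE (T.map (Equiv.swap i j).toEmbedding) T :=
  (GaleLE.refl _).of_map_swap hij (by simpa [mem_map_equiv] using hT)

theorem GaleLE.eq_Iio (h : GaleLE T (Iio j)) : T = Iio j := by
  rw [galeLE_iff_countBelow] at h
  have hIio : countBelow (Iio j) j = #(Iio j) := by
    rw [countBelow, filter_true_of_mem fun l hl => Fin.lt_def.mp (mem_Iio.mp hl)]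
  have hT : countBelow T j = #T :=
    le_antisymm (card_filter_le _ _) (h.1.trans_le (hIio.symm.trans_le (h.2 j)))
  exact eq_of_subset_of_card_le (fun l hl => mem_Iio.mpr (filter_card_eq hT l hl)) h.1.ge

end Gale

section Dominance

theorem sum_mem_stringPoint {σ : Type*} [Finite σ] [DecidableEq σ] {i j : σ} (S : Finset σ)
    (γ : σ → ℕ) (hij : i ≠ j) (t : ℕ) :
    ∑ l ∈ S, stringPoint γ i j t l + ((if i ∈ S then γ i else 0) + if j ∈ S then γ j else 0) =
      ∑ l ∈ S, γ l + ((if i ∈ S then t else 0) + if j ∈ S then γ i + γ j - t else 0) := by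
  have := Fintype.ofFinite σ
  simpa only [sum_ite_mem, univ_inter] using
    sum_stringPoint (fun l x => if l ∈ S then x else 0) γ hij t

variable {n : ℕ} {K : (Fin n → ℕ) → MvPolynomial (Fin n) ℤ} {α γ : Fin n → ℕ}
  {i j : Fin n}

theorem exists_map_swap_sum_le (hij : i ≠ j) (S : Finset (Fin n)) {t : ℕ} (ht : t ≤ γ i + γ j)
    (hmax : max (γ i) (γ j) ≤ max t (γ i + γ j - t)) :
    ∃ T, (T = S ∨ T = S.map (Equiv.swap i j).toEmbedding) ∧
      ∑ l ∈ T, stringPoint γ i j t l ≤ ∑ l ∈ S, γ l := by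
  have hS := sum_mem_stringPoint S γ hij t
  have hswap := sum_mem_stringPoint S γ hij (γ i + γ j - t)
  rcases le_or_gt (∑ l ∈ S, stringPoint γ i j t l) (∑ l ∈ S, γ l) with hle | hlt
  · exact ⟨S, .inl rfl, hle⟩
  · refine ⟨_, .inr rfl, ?_⟩
    rw [← stringPoint_comp_swap γ hij ht] at hswap
    rw [sum_map]
    simp only [comp_apply, Equiv.toEmbedding_apply] at hswap ⊢
    split_ifs at hS hswap <;> omega

theorem exists_galeLE_sum_le_sum_comp_swap (hij : (i : ℕ) + 1 = j) (hα : α i ≤ α j)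
    (S : Finset (Fin n)) :
    ∃ T, (j ∈ T → i ∈ T) ∧ GaleLE T S ∧ ∑ l ∈ T, α l ≤ ∑ l ∈ S, (α ∘ Equiv.swap i j) l := by
  have hne : i ≠ j := Fin.ne_of_val_ne (by omega)
  by_cases hS : j ∈ S → i ∈ S
  · refine ⟨S, hS, GaleLE.refl S, ?_⟩
    have hsum := sum_mem_stringPoint S α hne (α j)
    rw [comp_swap_eq_stringPoint]
    split_ifs at hsum with hi hj hj
    · omega
    · omega
    · exact absurd (hS hj) hi
    · omega
  · rw [Classical.not_imp] at hS
    refine ⟨S.map (Equiv.swap i j).toEmbedding, ?_, galeLE_map_swap hij fun _ => hS.1, ?_⟩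
    · simp [mem_map_equiv, hS]
    · rw [sum_map]
      rfl

/- Even for an initial segment `S`, a Demazure step may lead to a set of another shape, so the
induction has to run over all `S` at once. -/
theorem IsKeyFamily.exists_galeLE_sum_le (hK : IsKeyFamily K) (hγ : coeffAt (K α) γ ≠ 0)
    (S : Finset (Fin n)) : ∃ T, GaleLE T S ∧ ∑ l ∈ T, α l ≤ ∑ l ∈ S, γ l := by
  induction α using composition_induction generalizing γ S with
  | antitone α hα =>
    rw [hK.coeffAt_of_antitone hα, ite_ne_right_iff] at hγ
    exact ⟨S, GaleLE.refl S, by rw [hγ.1]⟩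
  | swap α i j hij hα ih =>
    have hne : i ≠ j := Fin.ne_of_val_ne (by omega)
    obtain ⟨t, htN, htmax, ht⟩ := (hK.isDemazureImage hij hα).exists_coeffAt_ne_zero hne hγ
    obtain ⟨S', hS', hsumS'⟩ := exists_map_swap_sum_le hne S htN htmax
    obtain ⟨T', hT'S', hsumT'⟩ := ih ht S'
    obtain ⟨T, hT, hTT', hsumT⟩ := exists_galeLE_sum_le_sum_comp_swap hij hα.le T'
    refine ⟨T, ?_, hsumT.trans (hsumT'.trans hsumS')⟩
    rcases hS' with rfl | rfl
    · exact hTT'.trans hT'S'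
    · exact (hTT'.trans hT'S').of_map_swap hij hT

theorem IsKeyFamily.sum_Iio_le (hK : IsKeyFamily K) (hγ : coeffAt (K α) γ ≠ 0) (j : Fin n) :
    ∑ l ∈ Iio j, α l ≤ ∑ l ∈ Iio j, γ l := by
  obtain ⟨T, hT, hsum⟩ := hK.exists_galeLE_sum_le hγ (Iio j)
  rwa [hT.eq_Iio] at hsum

end Dominance

section UpperBound

variable {n : ℕ} {K : (Fin n → ℕ) → MvPolynomial (Fin n) ℤ} {α : Fin n → ℕ}
  {i j k : Fin n}

theorem IsKeyFamily.coeffAt_stringPoint_le_one (hK : IsKeyFamily K) (hij : (i : ℕ) + 1 = j)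
    (hα : α i + 2 ≤ α j) : coeffAt (K α) (stringPoint α i j (α i + 1)) ≤ 1 := by
  have hne : i ≠ j := Fin.ne_of_val_ne (by omega)
  set γ := stringPoint α i j (α i + 1) with hγ
  have hγi : γ i = α i + 1 := by rw [hγ, stringPoint_apply, if_neg hne, if_pos rfl]
  have hγj : γ j = α j - 1 := by rw [hγ, stringPoint_apply, if_pos rfl]; omega
  have hmax : max (γ i) (γ j) = α j - 1 := by omega
  have hstring (t : ℕ) : stringPoint γ i j t = stringPoint α i j t :=
    stringPoint_stringPoint α hne (by omega) t
  have vanish : coeffAt (K (α ∘ Equiv.swap i j)) (stringPoint α i j (α j - 1)) = 0 := by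
    by_contra hsupp
    have hprefix := hK.sum_Iio_le hsupp j
    have htop := sum_mem_stringPoint (Iio j) α hne (α j)
    have hnext := sum_mem_stringPoint (Iio j) α hne (α j - 1)
    have hmem : i ∈ Iio j := mem_Iio.mpr (Fin.lt_def.mpr (by omega))
    rw [if_pos hmem, if_pos hmem, if_neg (by simp), if_neg (by simp)] at htop hnext
    rw [comp_swap_eq_stringPoint] at hprefix
    omega
  have hle := hK.coeffAt_le_add_one (α := α) (γ := γ) hij (by omega) (by omega) (by omega) <| by
    rw [hmax, Nat.sub_add_cancel (by omega), hstring, ← comp_swap_eq_stringPoint,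
      sum_sq_comp_swap]
  rwa [hmax, hstring, vanish, zero_add] at hle

theorem IsKeyFamily.coeffAt_stringPoint_le_add_one (hK : IsKeyFamily K) (hik : (i : ℕ) + 1 = k)
    (hkj : k < j) (hαk : α k = α i + 1) (hαj : α j = α i + 2) :
    coeffAt (K α) (stringPoint α i j (α i + 1)) ≤
      coeffAt (K (α ∘ Equiv.swap i k))
        (stringPoint (α ∘ Equiv.swap i k) k j ((α ∘ Equiv.swap i k) k + 1)) + 1 := by
  have hik' : i ≠ k := Fin.ne_of_val_ne (by omega)
  have hij : i ≠ j := Fin.ne_of_val_ne (by omega)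
  set γ := stringPoint α i j (α i + 1) with hγ
  have hγi : γ i = α i + 1 := by rw [hγ, stringPoint_apply, if_neg hij, if_pos rfl]
  have hγk : γ k = α i + 1 := by
    rw [hγ, stringPoint_apply, if_neg hkj.ne, if_neg hik'.symm, hαk]
  have hγ_eq : stringPoint (α ∘ Equiv.swap i k) k j ((α ∘ Equiv.swap i k) k + 1) = γ := by
    funext l
    simp only [hγ, stringPoint_apply, comp_apply, Equiv.swap_apply_def]
    grind
  have hnorm : ∑ l, α l ^ 2 ≤ ∑ l, stringPoint γ i k (α i + 1 + 1) l ^ 2 := by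
    have hαγ := sum_stringPoint (fun _ x => x ^ 2) α hij (α i + 1)
    have hγ_next := sum_stringPoint (fun _ x => x ^ 2) γ hik' (α i + 1 + 1)
    rw [← hγ, hαj, show α i + (α i + 2) - (α i + 1) = α i + 1 by omega] at hαγ
    rw [hγi, hγk, show α i + 1 + (α i + 1) - (α i + 1 + 1) = α i by omega] at hγ_next
    linarith
  have hle := hK.coeffAt_le_add_one (α := α) (γ := γ) hik (by omega) (by omega) (by omega)
    (by rwa [hγi, hγk, max_self])
  rw [hγ_eq]
  rwa [hγi, hγk, max_self, ← hγi, stringPoint_self] at hle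

theorem IsKeyFamily.coeffAt_stringPoint_le_of_between (hK : IsKeyFamily K) {d : ℕ}
    (hij : (i : ℕ) + d + 1 = j) (hα : α i + 2 ≤ α j)
    (hbetween : ∀ l, i < l → l < j → α l = α i + 1 ∧ α j = α i + 2) :
    coeffAt (K α) (stringPoint α i j (α i + 1)) ≤ d + 1 := by
  induction d generalizing α i with
  | zero => simpa using hK.coeffAt_stringPoint_le_one hij hα
  | succ d ih =>
    obtain ⟨k, hik⟩ : ∃ k : Fin n, (i : ℕ) + 1 = k := ⟨⟨i + 1, by omega⟩, rfl⟩
    have hkj : k < j := Fin.lt_def.mpr (by omega)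
    obtain ⟨hαk, hαj⟩ := hbetween k (Fin.lt_def.mpr (by omega)) hkj
    have hswap_k : (α ∘ Equiv.swap i k) k = α i := by simp
    have hswap {l : Fin n} (hl : k < l) : (α ∘ Equiv.swap i k) l = α l := by
      rw [comp_apply, Equiv.swap_apply_of_ne_of_ne (Fin.ne_of_val_ne (by omega)) hl.ne']
    have hrest := ih (α := α ∘ Equiv.swap i k) (i := k) (by omega)
      (by rw [hswap_k, hswap hkj, hαj]) fun l hkl hlj => by
        rw [hswap_k, hswap hkl, hswap hkj]
        exact hbetween l (Fin.lt_def.mpr (by omega)) hlj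
    have hstep := hK.coeffAt_stringPoint_le_add_one hik hkj hαk hαj
    push_cast
    linarith

end UpperBound

section Diagram

variable {n : ℕ} {α γ : Fin n → ℕ} {i j l a b : Fin n}

theorem mem_skyline : i ∈ skyline α j ↔ (j : ℕ) < α i := by
  simp [skyline]

/-- The exponent of the monomial `x^C`: row `r` contributes its number of boxes. -/
def diagramWeight (C : Fin n → Finset (Fin n)) (r : Fin n) : ℕ := #{c | r ∈ C c}

theorem xDiagram_eq_prod_pow (C : Fin n → Finset (Fin n)) :
    xDiagram C = ∏ r, X r ^ diagramWeight C r := by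
  have hcol (c : Fin n) : ∏ r ∈ C c, (X r : MvPolynomial (Fin n) ℤ) =
      ∏ r, if r ∈ C c then X r else 1 := by rw [prod_ite_mem, univ_inter]
  simp only [xDiagram, hcol]
  rw [prod_comm]
  simp only [diagramWeight, prod_ite, prod_const, one_pow, mul_one]

open scoped Classical in
theorem coeffAt_maxPoly (D : Fin n → Finset (Fin n)) (γ : Fin n → ℕ) :
    coeffAt (MaxPoly D) γ = #{C | DiagramLE C D ∧ diagramWeight C = γ} := by
  rw [coeffAt, MaxPoly, coeff_sum, ← filter_filter, card_filter, Nat.cast_sum]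
  refine sum_congr rfl fun C _ => ?_
  rw [xDiagram_eq_prod_pow, ← coeffAt, coeffAt_prod_X_pow, Nat.cast_ite, Nat.cast_one,
    Nat.cast_zero]

theorem diagramWeight_le (C : Fin n → Finset (Fin n)) (r : Fin n) : diagramWeight C r ≤ n :=
  (card_le_univ _).trans_eq (Fintype.card_fin n)

theorem diagramWeight_skyline (hα : ∀ r, α r ≤ n) : diagramWeight (skyline α) = α := by
  funext r
  simp [diagramWeight, skyline, Fin.card_filter_val_lt, hα r]

theorem diagramWeight_update (C : Fin n → Finset (Fin n)) (c : Fin n) (S : Finset (Fin n))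
    (r : Fin n) :
    (diagramWeight (update C c S) r + if r ∈ C c then 1 else 0) =
      diagramWeight C r + if r ∈ S then 1 else 0 := by
  have hoff : ∑ c' ∈ {c}ᶜ, (if r ∈ update C c S c' then 1 else 0) =
      ∑ c' ∈ {c}ᶜ, if r ∈ C c' then 1 else 0 :=
    sum_congr rfl fun c' hc' => by
      rw [update_of_ne (by simpa using hc')]
  simp only [diagramWeight, card_filter]
  rw [Fintype.sum_eq_add_sum_compl c, Fintype.sum_eq_add_sum_compl c, hoff, update_self]
  abel

/-- The skyline diagram with the box in row `l` of column `a` moved to row `i`, and the box in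
row `j` of column `b` moved to row `l`. -/
def shiftedSkyline (α : Fin n → ℕ) (i j a b l : Fin n) : Fin n → Finset (Fin n) :=
  update (update (skyline α) a ((insert i (skyline α a)).erase l)) b
    (insert l ((skyline α b).erase j))

theorem diagramLE_shiftedSkyline (hil : i ≤ l) (hlj : l ≤ j) (hil_mem : l = i ∨ l ∈ skyline α a)
    (hi : i ∉ skyline α a) (hj : j ∈ skyline α b) (hlj_mem : l = j ∨ l ∉ skyline α b) :
    DiagramLE (shiftedSkyline α i j a b l) (skyline α) := by
  have hcol_b : GaleLE (insert l ((skyline α b).erase j)) (skyline α b) := by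
    have h := galeLE_insert_insert (S := (skyline α b).erase j) hlj (notMem_erase j _)
      (by rw [mem_erase]; tauto)
    rwa [insert_erase hj] at h
  have hcol_a : GaleLE ((insert i (skyline α a)).erase l) (skyline α a) := by
    have h := galeLE_erase_erase (S := insert i (skyline α a)) hil (by rwa [mem_insert])
      (mem_insert_self i _)
    rwa [erase_insert hi] at h
  refine (forall_update_iff _ fun c S => GaleLE S (skyline α c)).mpr ⟨hcol_b, fun c _ => ?_⟩
  refine (forall_update_iff _ fun c S => GaleLE S (skyline α c)).mpr
    ⟨hcol_a, fun c _ => GaleLE.refl _⟩ c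

theorem diagramWeight_shiftedSkyline (hα : ∀ r, α r ≤ n) (ha : (a : ℕ) = α i)
    (hb : (b : ℕ) = α i + 1) (hj : α i + 2 ≤ α j)
    (hl : l = i ∨ l = j ∨ α l = α i + 1) :
    diagramWeight (shiftedSkyline α i j a b l) = stringPoint α i j (α i + 1) := by
  have hba : b ≠ a := Fin.ne_of_val_ne (by omega)
  funext r
  have hupdate_b := diagramWeight_update
    (update (skyline α) a ((insert i (skyline α a)).erase l)) b
    (insert l ((skyline α b).erase j)) r
  have hupdate_a := diagramWeight_update (skyline α) a ((insert i (skyline α a)).erase l) r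
  rw [diagramWeight_skyline hα] at hupdate_a
  rw [update_of_ne hba, ← shiftedSkyline] at hupdate_b
  simp only [mem_insert, mem_erase, mem_skyline, ha, hb] at hupdate_a hupdate_b
  rw [stringPoint_apply]
  grind

theorem shiftedSkyline_injOn (i j a b : Fin n) :
    Set.InjOn (shiftedSkyline α i j a b) {l | l = j ∨ l ∉ skyline α b} := by
  intro l hl l' _ h
  have hcol := congrFun h b
  simp only [shiftedSkyline, update_self] at hcol
  refine (insert_inj ?_).mp hcol
  rw [mem_erase]
  rcases hl with rfl | hl <;> tauto

theorem card_Icc_le_coeffAt_maxPoly (hα : ∀ r, α r ≤ n) (hj : α i + 2 ≤ α j)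
    (hbetween : ∀ l, i < l → l < j → α l = α i + 1) :
    (#(Icc i j) : ℤ) ≤ coeffAt (MaxPoly (skyline α)) (stringPoint α i j (α i + 1)) := by
  classical
  have hαj := hα j
  let a : Fin n := ⟨α i, by omega⟩
  let b : Fin n := ⟨α i + 1, by omega⟩
  have hcases {l : Fin n} (hl : l ∈ Icc i j) : l = i ∨ l = j ∨ α l = α i + 1 := by
    rw [mem_Icc] at hl
    rcases hl.1.eq_or_lt with rfl | hil
    · exact .inl rfl
    rcases hl.2.eq_or_lt with rfl | hlj
    · exact .inr (.inl rfl)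
    · exact .inr (.inr (hbetween l hil hlj))
  have hcol_b {l : Fin n} (hl : l ∈ Icc i j) : l = j ∨ l ∉ skyline α b := by
    rw [mem_skyline]
    rcases hcases hl with rfl | rfl | h <;> simp [b, *]
  rw [coeffAt_maxPoly, Nat.cast_le]
  refine card_le_card_of_injOn (shiftedSkyline α i j a b) (fun l hl => ?_)
    ((shiftedSkyline_injOn i j a b).mono fun l hl => hcol_b hl)
  have hcol_a : l = i ∨ l ∈ skyline α a := by
    refine (hcases hl).imp_right fun hl => mem_skyline.mpr ?_
    rcases hl with rfl | hl <;> simp only [a] <;> omega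
  have hlIcc := mem_Icc.mp hl
  rw [mem_coe, mem_filter]
  exact ⟨mem_univ _,
    diagramLE_shiftedSkyline hlIcc.1 hlIcc.2 hcol_a (by simp [mem_skyline, a])
      (mem_skyline.mpr (by simp only [b]; omega)) (hcol_b hl),
    diagramWeight_shiftedSkyline hα rfl rfl hj (hcases hl)⟩

end Diagram

theorem IsKeyFamily.le_of_eq_maxPoly {n : ℕ} {K : (Fin n → ℕ) → MvPolynomial (Fin n) ℤ}
    (hK : IsKeyFamily K) {α : Fin n → ℕ} {D : Fin n → Finset (Fin n)} (h : K α = MaxPoly D)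
    (r : Fin n) : α r ≤ n := by
  classical
  have hcard := coeffAt_maxPoly D α
  rw [← h, hK.coeffAt_self] at hcard
  obtain ⟨C, hC⟩ := card_pos.mp (by omega :
    0 < #{C : Fin n → Finset (Fin n) | DiagramLE C D ∧ diagramWeight C = α})
  rw [← (mem_filter.mp hC).2.2]
  exact diagramWeight_le C r

theorem exists_forall_between_eq_of_add_two_le {n : ℕ} {α : Fin n → ℕ} {i j : Fin n} (hij : i < j)
    (hα : α i + 2 ≤ α j) : ∃ i j, i < j ∧ α i + 2 ≤ α j ∧
      ∀ l, i < l → l < j → α l = α i + 1 ∧ α j = α i + 2 := by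
  induction hd : (j - i : ℕ) using Nat.strong_induction_on generalizing i j with
  | _ d ih =>
    by_cases hbetween : ∀ l, i < l → l < j → α l = α i + 1 ∧ α j = α i + 2
    · exact ⟨i, j, hij, hα, hbetween⟩
    push Not at hbetween
    obtain ⟨l, hil, hlj, hl⟩ := hbetween
    rcases le_or_gt (α i + 2) (α l) with hup | hlow
    · exact ih _ (by omega) hil hup rfl
    · exact ih _ (by omega) hlj (by omega) rfl

/-- If the key polynomial `κ_α` equals the upper bound `Max_α`, then `α` avoids the
composition pattern `(0,2)`. -/
theorem avoids_02_of_key_eq_max (n : ℕ) (hn : 1 ≤ n) (α : Fin n → ℕ)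
    (K : (Fin n → ℕ) → MvPolynomial (Fin n) ℤ) (hK : IsKeyFamily K)
    (h : K α = MaxPoly (skyline α)) :
    AvoidsZeroTwo α := by
  rintro ⟨i₀, j₀, hij₀, hα₀⟩
  obtain ⟨i, j, hij, hα, hbetween⟩ := exists_forall_between_eq_of_add_two_le hij₀ hα₀
  have hupper := hK.coeffAt_stringPoint_le_of_between (d := j - i - 1) (by omega) hα hbetween
  have hlower := card_Icc_le_coeffAt_maxPoly (hK.le_of_eq_maxPoly h) hα
    fun l hil hlj => (hbetween l hil hlj).1
  rw [← h, Fin.card_Icc] at hlower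
  omega
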